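/- The family of linear maps ((m,n) ↦ F^{(m,n)}) = ((m,n) ↦ (−iħ·a)^m ∘ (a†)^n), indexed by ℕ × ℕ, is linearly independent in End_ℂ(V). -/

import Mathlib

open Complex MvPolynomial Finset

noncomputable section

/-- The standard basis vector `e n` of `V = ℕ →₀ ℂ`. -/
def e (n : ℕ) : ℕ →₀ ℂ := Finsupp.single n 1

/-- The destruction operator `a`: `a (e 0) = 0`, `a (e (n+1)) = √(n+1) • e n`. -/
def aop : (ℕ →₀ ℂ) →ₗ[ℂ] (ℕ →₀ ℂ) :=
  Finsupp.lsum ℂ fun n => match n with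
    | 0 => 0
    | k + 1 => ((Real.sqrt (k + 1) : ℝ) : ℂ) • Finsupp.lsingle k

/-- The creation operator `a†`: `a† (e n) = √(n+1) • e (n+1)`. -/
def adop : (ℕ →₀ ℂ) →ₗ[ℂ] (ℕ →₀ ℂ) :=
  Finsupp.lsum ℂ fun n => ((Real.sqrt (n + 1) : ℝ) : ℂ) • Finsupp.lsingle (n + 1)

/-- `F^{(m,n)} = (−iℏ·a)^m ∘ (a†)^n` as an element of `End_ℂ(V)`. -/
def F (ℏ : ℝ) (m n : ℕ) : Module.End ℂ (ℕ →₀ ℂ) :=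
  ((-(Complex.I * ℏ)) • (aop : Module.End ℂ (ℕ →₀ ℂ))) ^ m * (adop : Module.End ℂ (ℕ →₀ ℂ)) ^ n

/-!
Put `μ = -iℏ`, `A = μ a` and `B = a†`, so that `⁅A, B⁆ = μ`. Up to sign, `ad B` and `ad A` act on
monomials `A ^ m * B ^ n` as `μ ∂/∂A` and `μ ∂/∂B`. Given a nontrivial relation, choose `(p, q)`
maximal in its support for the product order: `(ad B) ^ p (ad A) ^ q` kills every other monomial of
the relation and turns `A ^ p * B ^ q` into a nonzero scalar.
-/

theorem linearIndependent_of_triangular {ι K M N : Type*} [PartialOrder ι] [Ring K] [IsDomain K]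
    [AddCommGroup M] [Module K M] [AddCommGroup N] [Module K N] [Module.IsTorsionFree K N]
    {v : ι → M} (T : ι → M →ₗ[K] N) (hdiag : ∀ i, T i (v i) ≠ 0)
    (hzero : ∀ i j, ¬ i ≤ j → T i (v j) = 0) :
    LinearIndependent K v := by
  rw [linearIndependent_iff]
  intro c hc
  by_contra hne
  obtain ⟨i, hi⟩ := c.support.exists_maximal (Finsupp.support_nonempty_iff.mpr hne)
  have hrel : c i • T i (v i) = 0 := by
    calc c i • T i (v i) = ∑ j ∈ c.support, c j • T i (v j) := by
          refine Eq.symm (Finset.sum_eq_single_of_mem i hi.prop fun j hj hji => ?_)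
          rw [hzero i j fun hij => hji (hi.eq_of_le hj hij).symm, smul_zero]
      _ = T i (Finsupp.linearCombination K v c) := by
          simp only [Finsupp.linearCombination_apply, Finsupp.sum, map_sum, map_smul]
      _ = 0 := by rw [hc, map_zero]
  exact smul_ne_zero (Finsupp.mem_support_iff.mp hi.prop) (hdiag i) hrel

theorem pow_apply_eq_descFactorial_smul {K M : Type*} [CommSemiring K] [AddCommMonoid M]
    [Module K M] {D : Module.End K M} {v : ℕ → M} {μ : K}
    (hD : ∀ n, D (v n) = (n * μ) • v (n - 1)) (k n : ℕ) :
    (D ^ k) (v n) = (n.descFactorial k * μ ^ k) • v (n - k) := by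
  induction k with
  | zero => simp
  | succ k ih =>
    rw [pow_succ', Module.End.mul_apply, ih, map_smul, hD, smul_smul, Nat.descFactorial_succ,
      Nat.sub_sub]
    push_cast
    congr 1
    ring

section CanonicalCommutation

attribute [local instance] LieRing.ofAssociativeRing

variable {K R : Type*} [CommRing K] [Ring R] [Algebra K R] {A B : R} {μ : K}

theorem lie_pow_of_lie_eq_smul_one (h : ⁅A, B⁆ = μ • (1 : R)) (n : ℕ) :
    ⁅A, B ^ n⁆ = (n * μ) • B ^ (n - 1) := by
  induction n with
  | zero => simp [Ring.lie_def]
  | succ n ih =>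
    have leibniz : ⁅A, B ^ (n + 1)⁆ = ⁅A, B ^ n⁆ * B + B ^ n * ⁅A, B⁆ := by
      simp only [Ring.lie_def]
      noncomm_ring
    rw [leibniz, ih, h, mul_smul_comm, mul_one, smul_mul_assoc]
    cases n with
    | zero => simp
    | succ n =>
      simp only [Nat.add_sub_cancel, ← pow_succ, ← add_smul]
      push_cast
      ring_nf

theorem ad_pow_mul_pow (h : ⁅A, B⁆ = μ • (1 : R)) {X : R} (hX : Commute A X) (k n : ℕ) :
    (LieAlgebra.ad K R A ^ k) (X * B ^ n) =
      (n.descFactorial k * μ ^ k) • (X * B ^ (n - k)) := by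
  refine pow_apply_eq_descFactorial_smul (v := fun n => X * B ^ n) (fun n => ?_) k n
  calc LieAlgebra.ad K R A (X * B ^ n) = X * ⁅A, B ^ n⁆ := by
        simp only [LieAlgebra.ad_apply, Ring.lie_def, mul_sub, ← mul_assoc, hX.eq]
    _ = (n * μ) • (X * B ^ (n - 1)) := by rw [lie_pow_of_lie_eq_smul_one h, mul_smul_comm]

theorem ad_pow_pow_mul (h : ⁅A, B⁆ = μ • (1 : R)) {Y : R} (hY : Commute A Y) (k n : ℕ) :
    (LieAlgebra.ad K R A ^ k) (B ^ n * Y) =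
      (n.descFactorial k * μ ^ k) • (B ^ (n - k) * Y) := by
  refine pow_apply_eq_descFactorial_smul (v := fun n => B ^ n * Y) (fun n => ?_) k n
  calc LieAlgebra.ad K R A (B ^ n * Y) = ⁅A, B ^ n⁆ * Y := by
        simp only [LieAlgebra.ad_apply, Ring.lie_def, sub_mul, mul_assoc, hY.eq]
    _ = (n * μ) • (B ^ (n - 1) * Y) := by rw [lie_pow_of_lie_eq_smul_one h, smul_mul_assoc]

theorem ad_pow_mul_ad_pow_apply_pow_mul_pow (h : ⁅A, B⁆ = μ • (1 : R)) (p q m n : ℕ) :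
    (LieAlgebra.ad K R B ^ p * LieAlgebra.ad K R A ^ q) (A ^ m * B ^ n) =
      (n.descFactorial q * μ ^ q * (m.descFactorial p * (-μ) ^ p)) •
        (A ^ (m - p) * B ^ (n - q)) := by
  have h_swap : ⁅B, A⁆ = (-μ) • (1 : R) := by rw [← lie_skew, h, neg_smul]
  rw [Module.End.mul_apply, ad_pow_mul_pow h ((Commute.refl A).pow_right m), map_smul,
    ad_pow_pow_mul h_swap ((Commute.refl B).pow_right (n - q)), smul_smul]

theorem linearIndependent_pow_mul_pow_of_mul_eq_mul_add_smul_one [IsDomain K] [CharZero K]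
    [Nontrivial R] [Module.IsTorsionFree K R] (hμ : μ ≠ 0)
    (h : A * B = B * A + μ • (1 : R)) :
    LinearIndependent K (fun mn : ℕ × ℕ => A ^ mn.1 * B ^ mn.2) := by
  have hlie : ⁅A, B⁆ = μ • (1 : R) := by rw [Ring.lie_def, h, add_sub_cancel_left]
  refine linearIndependent_of_triangular
    (fun pq => LieAlgebra.ad K R B ^ pq.1 * LieAlgebra.ad K R A ^ pq.2) ?diag ?zero
  case diag =>
    rintro ⟨p, q⟩
    rw [ad_pow_mul_ad_pow_apply_pow_mul_pow hlie]
    simp [Nat.descFactorial_self, Nat.factorial_ne_zero, hμ]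
  case zero =>
    rintro ⟨p, q⟩ ⟨m, n⟩ hle
    have hlt : m < p ∨ n < q := by
      rwa [Prod.mk_le_mk, not_and_or, not_le, not_le] at hle
    rw [ad_pow_mul_ad_pow_apply_pow_mul_pow hlie]
    rcases hlt with hm | hn
    · simp [Nat.descFactorial_of_lt hm]
    · simp [Nat.descFactorial_of_lt hn]

end CanonicalCommutation

theorem aop_single_zero (c : ℂ) : aop (Finsupp.single 0 c) = 0 := by
  simp [aop]

theorem aop_single_succ (n : ℕ) (c : ℂ) :
    aop (Finsupp.single (n + 1) c) = Finsupp.single n (((√(n + 1) : ℝ) : ℂ) * c) := by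
  simp [aop]

theorem adop_single (n : ℕ) (c : ℂ) :
    adop (Finsupp.single n c) = Finsupp.single (n + 1) (((√(n + 1) : ℝ) : ℂ) * c) := by
  simp [adop]

theorem ofReal_sqrt_add_one_mul_self (n : ℕ) :
    ((√(n + 1) : ℝ) : ℂ) * ((√(n + 1) : ℝ) : ℂ) = n + 1 := by
  exact_mod_cast Real.mul_self_sqrt (by positivity : (0 : ℝ) ≤ n + 1)

theorem aop_adop_single (n : ℕ) (c : ℂ) :
    aop (adop (Finsupp.single n c)) = ((n : ℂ) + 1) • Finsupp.single n c := by
  rw [adop_single, aop_single_succ, ← mul_assoc, ofReal_sqrt_add_one_mul_self,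
    Finsupp.smul_single, smul_eq_mul]

theorem adop_aop_single (n : ℕ) (c : ℂ) :
    adop (aop (Finsupp.single n c)) = (n : ℂ) • Finsupp.single n c := by
  cases n with
  | zero => simp [aop_single_zero]
  | succ n =>
    rw [aop_single_succ, adop_single, ← mul_assoc, ofReal_sqrt_add_one_mul_self,
      Finsupp.smul_single, smul_eq_mul, Nat.cast_succ]

theorem aop_mul_adop : (aop * adop : Module.End ℂ (ℕ →₀ ℂ)) = adop * aop + 1 := by
  refine Finsupp.lhom_ext fun n c => ?_
  rw [LinearMap.add_apply, Module.End.mul_apply, Module.End.mul_apply, aop_adop_single,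
    adop_aop_single, add_smul, one_smul, Module.End.one_apply]

/-- the family `(m,n) ↦ F^{(m,n)}` is linearly independent in `End_ℂ(V)`. -/
theorem stmt2 (ℏ : ℝ) (hℏ : ℏ ≠ 0) :
    LinearIndependent ℂ (fun mn : ℕ × ℕ => F ℏ mn.1 mn.2) := by
  have hμ : -(I * ℏ) ≠ 0 := by simp [hℏ]
  refine linearIndependent_pow_mul_pow_of_mul_eq_mul_add_smul_one
    (R := Module.End ℂ (ℕ →₀ ℂ)) hμ ?_
  rw [smul_mul_assoc, aop_mul_adop, smul_add, mul_smul_comm]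

end
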